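/- Let w > 0 and 0 < R' < R. Then the ratio of spherical Bessel functions of the second kind satisfies lim_{n→∞} (y_n(wR)/y_n(wR'))·(R/R')^{n+1} = 1; in particular y_n(wR') ≠ 0 for all sufficiently large n. -/

import Mathlib

/-- Spherical Bessel function of the first kind `j_n`, defined by the standard
recurrence `j_{n+1}(z) = ((2n+1)/z) j_n(z) - j_{n-1}(z)`. -/
noncomputable def jsph : ℕ → ℝ → ℝ
  | 0, z => Real.sin z / z
  | 1, z => Real.sin z / z ^ 2 - Real.cos z / z
  | (n + 2), z => ((2 * (n : ℝ) + 3) / z) * jsph (n + 1) z - jsph n z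

/-- Spherical Bessel function of the second kind `y_n`, defined by the standard
recurrence `y_{n+1}(z) = ((2n+1)/z) y_n(z) - y_{n-1}(z)`. -/
noncomputable def ysph : ℕ → ℝ → ℝ
  | 0, z => -Real.cos z / z
  | 1, z => -Real.cos z / z ^ 2 - Real.sin z / z
  | (n + 2), z => ((2 * (n : ℝ) + 3) / z) * ysph (n + 1) z - ysph n z

/-- Spherical Hankel function of the first kind `h^{(1)}_n`. -/
noncomputable def h1sph (n : ℕ) (z : ℝ) : ℂ :=
  (jsph n z : ℂ) + Complex.I * (ysph n z : ℂ)

/-- Spherical Hankel function of the second kind `h^{(2)}_n`. -/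
noncomputable def h2sph (n : ℕ) (z : ℝ) : ℂ :=
  (jsph n z : ℂ) - Complex.I * (ysph n z : ℂ)

/-!
The normalized functions `u_n(z) = -z ^ (n + 1) y_n(z) / (2n - 1)‼` are entire and even, with
`u_n(0) = 1`, and satisfy `u_{n+1}'(z) = z u_n(z) / (2n + 1)`. If `|u_n(z)| ≤ exp (z ^ 2 / 2)`,
then integrating from `0` to `z` gives `|u_{n+1}(z) - 1| ≤ (exp (z ^ 2 / 2) - 1) / (2n + 1)`, and in
particular `|u_{n+1}(z)| ≤ exp (z ^ 2 / 2)`, so both bounds hold for all `n`. Hence `u_n(z) → 1`,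
that is `y_n(z) ~ -(2n - 1)‼ / z ^ (n + 1)`, and in the quotient of two such asymptotics the
double factorials cancel.
-/

open Filter Topology Asymptotics
open scoped Nat

/-- The spherical Bessel function `y_n` divided by its leading term `-(2n - 1)‼ / z ^ (n + 1)`, see
`ysph_eq_mul_ysphNormalized`. It is defined by the recurrence inherited from `y_n`, rather than as
a quotient, so that it takes the value `1` at the removable singularity `z = 0`. -/
noncomputable def ysphNormalized : ℕ → ℝ → ℝ
  | 0, z => Real.cos z
  | 1, z => Real.cos z + z * Real.sin z
  | n + 2, z =>
    ysphNormalized (n + 1) z - z ^ 2 / ((2 * n + 1) * (2 * n + 3)) * ysphNormalized n z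

lemma ysphNormalized_apply_zero (n : ℕ) : ysphNormalized n 0 = 1 := by
  induction n using Nat.twoStepInduction with
  | zero => simp [ysphNormalized]
  | one => simp [ysphNormalized]
  | more n _ ih => simp [ysphNormalized, ih]

lemma ysphNormalized_neg (n : ℕ) (z : ℝ) : ysphNormalized n (-z) = ysphNormalized n z := by
  induction n using Nat.twoStepInduction with
  | zero => simp [ysphNormalized]
  | one => simp [ysphNormalized]
  | more n ih₀ ih₁ => simp [ysphNormalized, ih₀, ih₁]

lemma ysphNormalized_abs (n : ℕ) (z : ℝ) : ysphNormalized n |z| = ysphNormalized n z := by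
  rcases abs_choice z with h | h <;> simp only [h, ysphNormalized_neg]

lemma hasDerivAt_ysphNormalized_zero (z : ℝ) :
    HasDerivAt (ysphNormalized 0) (-Real.sin z) z := by
  simpa only [funext (ysphNormalized.eq_1 ·)] using Real.hasDerivAt_cos z

lemma hasDerivAt_ysphNormalized_one (z : ℝ) :
    HasDerivAt (ysphNormalized 1) (z * Real.cos z) z := by
  refine (((Real.hasDerivAt_cos z).add ((hasDerivAt_id z).mul (Real.hasDerivAt_sin z))).congr_deriv
    (by simp)).congr_of_eventuallyEq (.of_forall fun t => ?_)
  simp [ysphNormalized]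

lemma hasDerivAt_ysphNormalized_add_two {n : ℕ} {a b z : ℝ}
    (ha : HasDerivAt (ysphNormalized n) a z) (hb : HasDerivAt (ysphNormalized (n + 1)) b z) :
    HasDerivAt (ysphNormalized (n + 2))
      (b - (2 * z / ((2 * n + 1) * (2 * n + 3)) * ysphNormalized n z +
        z ^ 2 / ((2 * n + 1) * (2 * n + 3)) * a)) z := by
  have h_sq := (hasDerivAt_pow 2 z).div_const ((2 * (n : ℝ) + 1) * (2 * n + 3))
  refine ((hb.sub (h_sq.mul ha)).congr_deriv (by simp)).congr_of_eventuallyEq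
    (.of_forall fun t => ?_)
  simp [ysphNormalized]

lemma hasDerivAt_ysphNormalized_succ (n : ℕ) (z : ℝ) :
    HasDerivAt (ysphNormalized (n + 1)) (z * ysphNormalized n z / (2 * n + 1)) z := by
  induction n using Nat.twoStepInduction with
  | zero => simpa [ysphNormalized] using hasDerivAt_ysphNormalized_one z
  | one =>
    convert hasDerivAt_ysphNormalized_add_two (hasDerivAt_ysphNormalized_zero z)
      (hasDerivAt_ysphNormalized_one z) using 1
    simp only [ysphNormalized]
    push_cast
    ring
  | more n ih₀ ih₁ =>
    convert hasDerivAt_ysphNormalized_add_two ih₀ ih₁ using 1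
    simp only [ysphNormalized]
    push_cast
    field_simp
    ring

lemma abs_ysphNormalized_succ_sub_one_le_of_nonneg {n : ℕ} {x : ℝ} (hx : 0 ≤ x)
    (hn : ∀ t ∈ Set.Ico 0 x, |ysphNormalized n t| ≤ Real.exp (t ^ 2 / 2)) :
    |ysphNormalized (n + 1) x - 1| ≤ (Real.exp (x ^ 2 / 2) - 1) / (2 * n + 1) := by
  have hasDerivAt_sub_one (t : ℝ) := (hasDerivAt_ysphNormalized_succ n t).sub_const 1
  have hasDerivAt_majorant (t : ℝ) :
      HasDerivAt (fun s : ℝ => (Real.exp (s ^ 2 / 2) - 1) / (2 * n + 1))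
        (t * Real.exp (t ^ 2 / 2) / (2 * n + 1)) t := by
    have h_deriv := ((((hasDerivAt_pow 2 t).div_const 2).exp).sub_const 1).div_const
      (2 * (n : ℝ) + 1)
    exact h_deriv.congr_deriv (by push_cast; ring)
  refine image_norm_le_of_norm_deriv_right_le_deriv_boundary
    (fun t _ => (hasDerivAt_sub_one t).continuousAt.continuousWithinAt)
    (fun t _ => (hasDerivAt_sub_one t).hasDerivWithinAt)
    (by simp [ysphNormalized_apply_zero]) hasDerivAt_majorant (fun t ht => ?_)
    (Set.right_mem_Icc.2 hx)
  rw [norm_div, norm_mul, Real.norm_of_nonneg ht.1,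
    Real.norm_of_nonneg (by positivity : (0 : ℝ) ≤ 2 * n + 1)]
  have h_bound : ‖ysphNormalized n t‖ ≤ Real.exp (t ^ 2 / 2) := hn t ht
  have h_nonneg : 0 ≤ t := ht.1
  gcongr

lemma abs_ysphNormalized_le_exp (n : ℕ) (z : ℝ) :
    |ysphNormalized n z| ≤ Real.exp (z ^ 2 / 2) := by
  induction n generalizing z with
  | zero => exact (Real.abs_cos_le_one z).trans (Real.one_le_exp (by positivity))
  | succ n ih =>
    have h_exp : 0 ≤ Real.exp (z ^ 2 / 2) - 1 := sub_nonneg.2 (Real.one_le_exp (by positivity))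
    calc |ysphNormalized (n + 1) z|
        = |ysphNormalized (n + 1) |z| - 1 + 1| := by rw [sub_add_cancel, ysphNormalized_abs]
      _ ≤ |ysphNormalized (n + 1) |z| - 1| + 1 := (abs_add_le _ _).trans_eq (by rw [abs_one])
      _ ≤ (Real.exp (z ^ 2 / 2) - 1) / (2 * n + 1) + 1 := by
          simpa using abs_ysphNormalized_succ_sub_one_le_of_nonneg (abs_nonneg z) fun t _ => ih t
      _ ≤ Real.exp (z ^ 2 / 2) - 1 + 1 := by
          gcongr
          exact div_le_self h_exp (by linarith [n.cast_nonneg (α := ℝ)])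
      _ = Real.exp (z ^ 2 / 2) := sub_add_cancel _ _

lemma abs_ysphNormalized_succ_sub_one_le (n : ℕ) (z : ℝ) :
    |ysphNormalized (n + 1) z - 1| ≤ (Real.exp (z ^ 2 / 2) - 1) / (2 * n + 1) := by
  simpa [ysphNormalized_abs] using
    abs_ysphNormalized_succ_sub_one_le_of_nonneg (abs_nonneg z)
      fun t _ => abs_ysphNormalized_le_exp n t

lemma tendsto_ysphNormalized (z : ℝ) :
    Tendsto (fun n => ysphNormalized n z) atTop (𝓝 1) := by
  have h_denom : Tendsto (fun n : ℕ => 2 * (n : ℝ) + 1) atTop atTop :=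
    tendsto_atTop_add_const_right _ _ (tendsto_natCast_atTop_atTop.const_mul_atTop two_pos)
  rw [← tendsto_add_atTop_iff_nat 1, tendsto_iff_norm_sub_tendsto_zero]
  exact squeeze_zero (fun _ => norm_nonneg _) (fun n => abs_ysphNormalized_succ_sub_one_le n z)
    (tendsto_const_nhds.div_atTop h_denom)

-- For `n = 0` the truncated `2 * n - 1` is `0`, and `0‼ = 1` is the usual value of `(-1)‼`.
lemma ysph_eq_mul_ysphNormalized {z : ℝ} (hz : z ≠ 0) (n : ℕ) :
    ysph n z = -((2 * n - 1)‼ / z ^ (n + 1)) * ysphNormalized n z := by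
  have doubleFactorial_succ (m : ℕ) :
      ((2 * (m + 1) - 1)‼ : ℝ) = (2 * m + 1) * (2 * m - 1)‼ := by
    exact_mod_cast Nat.doubleFactorial_add_one (2 * m)
  induction n using Nat.twoStepInduction with
  | zero => simp [ysph, ysphNormalized, div_eq_inv_mul]
  | one =>
    have doubleFactorial_one : (2 * 1 - 1)‼ = 1 := rfl
    simp only [ysph, ysphNormalized, doubleFactorial_one, Nat.cast_one]
    field_simp
    ring
  | more n ih₀ ih₁ =>
    rw [ysph, ih₀, ih₁, ysphNormalized, doubleFactorial_succ (n + 1), doubleFactorial_succ n]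
    push_cast
    field_simp
    ring

lemma ysph_isEquivalent {z : ℝ} (hz : z ≠ 0) :
    (fun n => ysph n z) ~[atTop] fun n => -((2 * n - 1)‼ / z ^ (n + 1)) := by
  refine isEquivalent_iff_exists_eq_mul.2
    ⟨fun n => ysphNormalized n z, tendsto_ysphNormalized z, .of_forall fun n => ?_⟩
  exact (ysph_eq_mul_ysphNormalized hz n).trans (mul_comm _ _)

lemma eventually_ysph_ne_zero {z : ℝ} (hz : z ≠ 0) : ∀ᶠ n in atTop, ysph n z ≠ 0 := by
  filter_upwards [(tendsto_ysphNormalized z).eventually_ne one_ne_zero] with n hn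
  rw [ysph_eq_mul_ysphNormalized hz]
  have h_factorial : ((2 * n - 1)‼ : ℝ) ≠ 0 := by positivity
  exact mul_ne_zero (neg_ne_zero.2 (div_ne_zero h_factorial (pow_ne_zero _ hz))) hn

theorem spherical_bessel_y_ratio_limit_general {w R R' : ℝ}
    (hw : w ≠ 0) (hR : R ≠ 0) (hR' : R' ≠ 0) :
    Tendsto (fun n : ℕ => ysph n (w * R) / ysph n (w * R') * (R / R') ^ (n + 1))
      atTop (𝓝 1) ∧
    ∃ N : ℕ, ∀ n : ℕ, N ≤ n → ysph n (w * R') ≠ 0 := by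
  refine ⟨?_, eventually_atTop.1 (eventually_ysph_ne_zero (mul_ne_zero hw hR'))⟩
  have h_ratio := (ysph_isEquivalent (mul_ne_zero hw hR)).div
    (ysph_isEquivalent (mul_ne_zero hw hR'))
  have h_normalized := h_ratio.mul (IsEquivalent.refl (u := fun n : ℕ => (R / R') ^ (n + 1)))
  refine (isEquivalent_const_iff_tendsto one_ne_zero).1 (h_normalized.congr_right ?_)
  refine .of_forall fun n => ?_
  have h_factorial : ((2 * n - 1)‼ : ℝ) ≠ 0 := by positivity
  simp only [Pi.mul_apply, Pi.div_apply, Function.const_apply, mul_pow, div_pow]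
  field_simp

/-- `y_n(wR)/y_n(wR') ~ (R'/R)^{n+1}`: the normalized ratio tends to 1, and in
particular `y_n(wR') ≠ 0` for all sufficiently large `n`. -/
theorem spherical_bessel_y_ratio_limit (w R R' : ℝ)
    (hw : 0 < w) (hR' : 0 < R') (hRR : R' < R) :
    Filter.Tendsto (fun n : ℕ => ysph n (w * R) / ysph n (w * R') * (R / R') ^ (n + 1))
      Filter.atTop (nhds 1) ∧
    ∃ N : ℕ, ∀ n : ℕ, N ≤ n → ysph n (w * R') ≠ 0 :=
  spherical_bessel_y_ratio_limit_general hw.ne' (hR'.trans hRR).ne' hR'.ne'
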